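/- Let p > 0, 0 < δ < p, λ > 0, μ > 0, q > 0, r > 0, and let W^{(q)}, 𝕎^{(q)} be the explicit q-scale functions of the Cramér–Lundberg model, with w^{(q)}(x;−z) = W^{(q)}(x+z) + δ∫₀ˣ 𝕎^{(q)}(x−y)W^{(q)′}(y+z)dy. For x > 0: e^{−λr}[ p·w^{(q)}(x;−pr) + ∫₀^{pr} w^{(q)}(x;−(pr−y)) ((pr−y)/r) e^{−μy} Σ_{m=0}^∞ ((μλr)^{m+1}/(m!(m+1)!)) y^m dy ] = e^{qr}(p−δ)𝕎^{(q)}(x) − (1/(μλ)) [ (q+λ)𝕎^{(q)}(x) − (p−δ)𝕎^{(q)′}(x) ] [ (q+λ)e^{qr} − p·C ], where C is the explicit constant given by C = e^{−λr}[ p W^{(q)′}(pr) + A⁻ q⁺(q) e^{q⁺(q)pr} Σ_{m=0}^∞ ((pr(q⁻(q)+μ))^m/(m!(m+1)!)) γ(m+1, (q⁺(q)+μ)pr) (pr(q⁺(q)+μ) − (m+1)) − A⁺ q⁻(q) e^{q⁻(q)pr} Σ_{m=0}^∞ ((pr(q⁺(q)+μ))^m/(m!(m+1)!)) γ(m+1,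 (q⁻(q)+μ)pr) (pr(q⁻(q)+μ) − (m+1)) + (e^{−μpr}/(pr)) Σ_{m=0}^∞ ((pλμr²)^{m+1}/(m!(m+1)!)) ]. -/

import Mathlib

open MeasureTheory

/- Cramér–Lundberg model: X_t = pt − Σ_{i≤N_t}U_i with Poisson(λ) arrivals and
   Exp(μ) claims; Y_t = X_t − δt.  The law of X_r is that of pr − S_r with
   ℙ(S_r ∈ dy) = e^{−λr}(δ₀(dy) + e^{−μy}Σ_m ((μλr)^{m+1}/(m!(m+1)!))y^m dy),
   so the left-hand side below is the Parisian refracted scale function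
   V^{(q)}(x) = ∫₀^∞ w^{(q)}(x;−z)(z/r)ℙ(X_r ∈ dz) for x > 0. -/

noncomputable def qp (p lam μ q : ℝ) : ℝ :=
  (q + lam - μ * p + Real.sqrt ((q + lam - μ * p) ^ 2 + 4 * p * q * μ)) / (2 * p)

noncomputable def qm (p lam μ q : ℝ) : ℝ :=
  (q + lam - μ * p - Real.sqrt ((q + lam - μ * p) ^ 2 + 4 * p * q * μ)) / (2 * p)

noncomputable def Ap (p lam μ q : ℝ) : ℝ := (μ + qp p lam μ q) / (qp p lam μ q - qm p lam μ q)

noncomputable def Am (p lam μ q : ℝ) : ℝ := (μ + qm p lam μ q) / (qp p lam μ q - qm p lam μ q)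

/-- The q-scale function W^{(q)} of X (its formula on [0,∞)). -/
noncomputable def Wq (p lam μ q x : ℝ) : ℝ :=
  1 / p * (Ap p lam μ q * Real.exp (qp p lam μ q * x) -
    Am p lam μ q * Real.exp (qm p lam μ q * x))

/-- The q-scale function 𝕎^{(q)} of Y (its formula on [0,∞)). -/
noncomputable def WWq (p δ lam μ q x : ℝ) : ℝ := Wq (p - δ) lam μ q x

/-- The refracted scale function w^{(q)}(x;−z). -/
noncomputable def wq (p δ lam μ q x z : ℝ) : ℝ :=
  Wq p lam μ q (x + z) +
    δ * ∫ y in (0 : ℝ)..x, WWq p δ lam μ q (x - y) * deriv (Wq p lam μ q) (y + z)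

/-- Lower incomplete gamma function γ(a,x) = ∫₀ˣ t^{a−1}e^{−t} dt. -/
noncomputable def lowerGamma (a x : ℝ) : ℝ :=
  ∫ t in (0 : ℝ)..x, t ^ (a - 1) * Real.exp (-t)

/-- The explicit constant C. -/
noncomputable def Cconst (p lam μ q r : ℝ) : ℝ :=
  Real.exp (-lam * r) *
    (p * deriv (Wq p lam μ q) (p * r) +
      Am p lam μ q * qp p lam μ q * Real.exp (qp p lam μ q * (p * r)) *
        (∑' m : ℕ, (p * r * (qm p lam μ q + μ)) ^ m /
            ((Nat.factorial m : ℝ) * (Nat.factorial (m + 1) : ℝ)) *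
          lowerGamma ((m : ℝ) + 1) ((qp p lam μ q + μ) * (p * r)) *
          (p * r * (qp p lam μ q + μ) - ((m : ℝ) + 1))) -
      Ap p lam μ q * qm p lam μ q * Real.exp (qm p lam μ q * (p * r)) *
        (∑' m : ℕ, (p * r * (qp p lam μ q + μ)) ^ m /
            ((Nat.factorial m : ℝ) * (Nat.factorial (m + 1) : ℝ)) *
          lowerGamma ((m : ℝ) + 1) ((qm p lam μ q + μ) * (p * r)) *
          (p * r * (qm p lam μ q + μ) - ((m : ℝ) + 1))) +
      Real.exp (-μ * (p * r)) / (p * r) *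
        (∑' m : ℕ, (p * lam * μ * r ^ 2) ^ (m + 1) /
          ((Nat.factorial m : ℝ) * (Nat.factorial (m + 1) : ℝ))))

/-
The left-hand side is the linear functional `f ↦ ∫₀^∞ f(z) (z / r) ℙ(X_r ∈ dz)` applied to
`w(x; -·)`. Integrating by parts, one finds that `w(x; -z)` is a combination of `W z` and `W' z`,
namely `(p - δ) 𝕎 x * W z - 𝔻 x * D z / (λ μ)` with `D = (q + λ) W - p W'` and `𝔻` its analogue for
`Y`. It remains to evaluate the functional at `W`, where it is `exp (q r)`, and at `W'`, where it
is `C`.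

Both are combinations of the exponentials `z ↦ exp (s z)` with `s = q⁺, q⁻`. On such a function,
the functional is, up to explicit factors, `E (N - n)⁺` for independent Poisson variables `N`, `n`
of rates `p r (s + μ)` and `p r (t + μ)`, where `t` is the other root. The tails of `N` are
incomplete gamma functions, which gives the series in `C`. At `W` only the difference
`E (N - n)⁺ - E (n - N)⁺ = E (N - n)` occurs, so these series cancel.
-/

open Real
open scoped Nat

section ExcessSeries

lemma hasSum_pow_div_factorial (x : ℝ) : HasSum (fun n : ℕ => x ^ n / n !) (exp x) := by
  rw [exp_eq_exp_ℝ]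
  exact NormedSpace.expSeries_div_hasSum_exp x

lemma hasSum_natCast_mul_pow_div_factorial (x : ℝ) :
    HasSum (fun n : ℕ => (n : ℝ) * (x ^ n / n !)) (x * exp x) := by
  rw [← hasSum_nat_add_iff' 1]
  simp only [Finset.sum_range_one, Nat.cast_zero, zero_mul, sub_zero]
  refine ((hasSum_pow_div_factorial x).mul_left x).congr_fun fun n => ?_
  rw [Nat.factorial_succ]
  push_cast
  field_simp
  ring

lemma summable_excessSum (u v : ℝ) :
    Summable fun x : ℕ × ℕ => v ^ x.1 / x.1 ! * (((x.2 - x.1 : ℕ) : ℝ) * (u ^ x.2 / x.2 !)) := by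
  refine (Summable.mul_norm (hasSum_pow_div_factorial v).summable.norm
    (hasSum_natCast_mul_pow_div_factorial u).summable.norm).of_norm_bounded fun x => ?_
  simp only [norm_mul, RCLike.norm_natCast]
  gcongr
  exact Nat.sub_le _ _

/-- The double series `∑ (N - n)⁺ u ^ N / N! * v ^ n / n!`; up to the factor `exp (u + v)` it is
the expectation of `(N - n)⁺` for independent Poisson variables `N`, `n` of rates `u`, `v`. The
positive part is encoded by truncated subtraction in `ℕ`. -/
noncomputable def excessSum (u v : ℝ) : ℝ :=
  ∑' x : ℕ × ℕ, v ^ x.1 / x.1 ! * (((x.2 - x.1 : ℕ) : ℝ) * (u ^ x.2 / x.2 !))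

lemma excessSum_sub_excessSum_swap (u v : ℝ) :
    excessSum u v - excessSum v u = (u - v) * exp (u + v) := by
  have hdiff : HasSum (fun x : ℕ × ℕ => ((x.2 : ℝ) - x.1) * (v ^ x.1 / x.1 ! * (u ^ x.2 / x.2 !)))
      ((u - v) * exp (u + v)) := by
    have hu := hasSum_pow_div_factorial u
    have hv := hasSum_pow_div_factorial v
    have hprod {f g : ℕ → ℝ} {a b : ℝ} (hf : HasSum f a) (hg : HasSum g b) :
        HasSum (fun x : ℕ × ℕ => f x.1 * g x.2) (a * b) :=
      hf.mul hg (summable_mul_of_summable_norm hf.summable.norm hg.summable.norm)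
    have hN := hprod hv (hasSum_natCast_mul_pow_div_factorial u)
    have hn := hprod (hasSum_natCast_mul_pow_div_factorial v) hu
    rw [show (u - v) * exp (u + v) = exp v * (u * exp u) - v * exp v * exp u by
      rw [exp_add]; ring]
    exact (hN.sub hn).congr_fun fun x => by ring
  have hswap : HasSum (fun x : ℕ × ℕ => u ^ x.2 / x.2 ! * (((x.1 - x.2 : ℕ) : ℝ) *
      (v ^ x.1 / x.1 !))) (excessSum v u) :=
    (Equiv.prodComm ℕ ℕ).hasSum_iff.mpr (summable_excessSum v u).hasSum
  refine ((summable_excessSum u v).hasSum.sub hswap).unique (hdiff.congr_fun fun x => ?_)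
  have hparts : (((x.2 - x.1 : ℕ) : ℝ) - ((x.1 - x.2 : ℕ) : ℝ)) = x.2 - x.1 := by
    rcases le_total x.1 x.2 with h | h <;> simp [h]
  linear_combination v ^ x.1 / x.1 ! * (u ^ x.2 / x.2 !) * hparts

lemma summable_expExcess (n : ℕ) (u : ℝ) :
    Summable fun k : ℕ => ((k - n : ℕ) : ℝ) * (u ^ k / k !) := by
  refine (hasSum_natCast_mul_pow_div_factorial u).summable.norm.of_norm_bounded fun k => ?_
  simp only [norm_mul, RCLike.norm_natCast]
  gcongr
  exact Nat.sub_le _ _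

/-- The series `∑ (k - n)⁺ u ^ k / k!`; up to the factor `exp u` it is the expectation of
`(N - n)⁺` for a Poisson variable `N` of rate `u`. The positive part is encoded by truncated
subtraction in `ℕ`. -/
noncomputable def expExcess (n : ℕ) (u : ℝ) : ℝ :=
  ∑' k : ℕ, ((k - n : ℕ) : ℝ) * (u ^ k / k !)

lemma hasSum_pow_div_factorial_mul_expExcess (u v : ℝ) :
    HasSum (fun n : ℕ => v ^ n / n ! * expExcess n u) (excessSum u v) :=
  (summable_excessSum u v).hasSum.prod_fiberwise fun n =>
    (summable_expExcess n u).hasSum.mul_left _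

lemma expExcess_zero (u : ℝ) : expExcess 0 u = u * exp u :=
  (hasSum_natCast_mul_pow_div_factorial u).tsum_eq

lemma expExcess_sub_expExcess_succ (n : ℕ) (u : ℝ) :
    expExcess n u - expExcess (n + 1) u =
      ∑' k : ℕ, (Set.Ioi n).indicator (fun k => u ^ k / k !) k := by
  rw [expExcess, expExcess, ← (summable_expExcess n u).tsum_sub (summable_expExcess (n + 1) u)]
  refine tsum_congr fun k => ?_
  by_cases hk : n < k
  · rw [Set.indicator_of_mem (Set.mem_Ioi.mpr hk), ← sub_mul,
      show k - n = k - (n + 1) + 1 by lia]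
    push_cast
    ring
  · rw [Set.indicator_of_notMem (by simpa using hk), show k - n = 0 by lia,
      show k - (n + 1) = 0 by lia, sub_self]

end ExcessSeries

section IncompleteGamma

lemma lowerGamma_natCast_add_one (m : ℕ) (x : ℝ) :
    lowerGamma ((m : ℝ) + 1) x = ∫ t in (0 : ℝ)..x, t ^ m * exp (-t) := by
  simp [lowerGamma]

lemma lowerGamma_one (x : ℝ) : lowerGamma 1 x = 1 - exp (-x) := by
  simp [lowerGamma]

lemma lowerGamma_succ (m : ℕ) (x : ℝ) :
    lowerGamma (((m + 1 : ℕ) : ℝ) + 1) x =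
      ((m : ℝ) + 1) * lowerGamma ((m : ℝ) + 1) x - x ^ (m + 1) * exp (-x) := by
  rw [lowerGamma_natCast_add_one, lowerGamma_natCast_add_one]
  have hderiv : ∀ t ∈ Set.uIcc 0 x, HasDerivAt (fun t : ℝ => t ^ (m + 1) * exp (-t))
      (((m : ℝ) + 1) * (t ^ m * exp (-t)) - t ^ (m + 1) * exp (-t)) t := by
    intro t _
    refine ((hasDerivAt_pow (m + 1) t).mul (hasDerivAt_neg t).exp).congr_deriv ?_
    rw [Nat.add_sub_cancel]
    push_cast
    ring
  have hparts := intervalIntegral.integral_eq_sub_of_hasDerivAt hderiv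
    (Continuous.intervalIntegrable (by fun_prop) _ _)
  rw [intervalIntegral.integral_sub (Continuous.intervalIntegrable (by fun_prop) _ _)
    (Continuous.intervalIntegrable (by fun_prop) _ _),
    intervalIntegral.integral_const_mul] at hparts
  rw [zero_pow m.succ_ne_zero, zero_mul, sub_zero] at hparts
  linear_combination -hparts

lemma hasSum_indicator_Ioi_pow_div_factorial (n : ℕ) (x : ℝ) :
    HasSum (fun k : ℕ => (Set.Ioi n).indicator (fun k => x ^ k / k !) k)
      (exp x * lowerGamma ((n : ℝ) + 1) x / n !) := by
  have hexp : exp x * exp (-x) = 1 := by rw [← exp_add, add_neg_cancel, exp_zero]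
  induction n with
  | zero =>
    have h := (hasSum_pow_div_factorial x).sub (hasSum_ite_eq 0 (1 : ℝ))
    rw [show exp x * lowerGamma (((0 : ℕ) : ℝ) + 1) x / (0 ! : ℕ) = exp x - 1 by
      rw [Nat.cast_zero, zero_add, lowerGamma_one]
      simp only [Nat.factorial_zero, Nat.cast_one, div_one]
      linear_combination -hexp]
    refine h.congr_fun fun k => ?_
    rcases k.eq_zero_or_pos with rfl | hk
    · simp
    · simp [hk, hk.ne']
  | succ n ih =>
    have h := ih.sub (hasSum_ite_eq (n + 1) (x ^ (n + 1) / (n + 1) !))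
    rw [show exp x * lowerGamma (((n + 1 : ℕ) : ℝ) + 1) x / ((n + 1) ! : ℕ) =
        exp x * lowerGamma ((n : ℝ) + 1) x / (n !) - (x ^ (n + 1) / (n + 1) !) by
      rw [lowerGamma_succ, Nat.factorial_succ]
      push_cast
      field_simp
      linear_combination -x ^ (n + 1) * hexp]
    refine h.congr_fun fun k => ?_
    rcases lt_trichotomy k (n + 1) with hk | rfl | hk
    · simp [hk.ne, hk.le, Nat.lt_succ_iff.mp hk]
    · simp
    · simp [hk, hk.ne', (Nat.lt_succ_self n).trans hk]

lemma factorial_mul_expExcess_succ (n : ℕ) (x : ℝ) :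
    n ! * expExcess (n + 1) x =
      exp x * (lowerGamma ((n : ℝ) + 1) x * (x - ((n : ℝ) + 1))) + x ^ (n + 1) := by
  have hstep (n : ℕ) : expExcess (n + 1) x =
      expExcess n x - exp x * lowerGamma ((n : ℝ) + 1) x / n ! := by
    rw [← (hasSum_indicator_Ioi_pow_div_factorial n x).tsum_eq, ← expExcess_sub_expExcess_succ,
      sub_sub_cancel]
  have hexp : exp x * exp (-x) = 1 := by rw [← exp_add, add_neg_cancel, exp_zero]
  induction n with
  | zero =>
    rw [hstep, expExcess_zero, Nat.cast_zero, zero_add, lowerGamma_one]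
    simp only [Nat.factorial_zero, Nat.cast_one, one_mul, div_one]
    linear_combination x * hexp
  | succ n ih =>
    rw [hstep, mul_sub, mul_div_cancel₀ _ (by positivity), lowerGamma_succ, Nat.factorial_succ]
    push_cast
    linear_combination ((n : ℝ) + 1) * ih + (x - (n + 1)) * x ^ (n + 1) * hexp

end IncompleteGamma

section PowerSeries

variable {c : ℕ → ℝ} {T : ℝ}

lemma norm_mul_pow_le_of_mem_uIcc {y : ℝ} (a : ℝ) (hy : y ∈ Set.uIcc 0 T) (m : ℕ) :
    ‖a * y ^ m‖ ≤ |a| * |T| ^ m := by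
  rw [norm_mul, norm_pow, norm_eq_abs, norm_eq_abs]
  have hyT : |y| ≤ |T| := by simpa using Set.abs_sub_left_of_mem_uIcc hy
  gcongr

lemma continuousOn_tsum_mul_pow (hc : Summable fun m => |c m| * |T| ^ m) :
    ContinuousOn (fun y : ℝ => ∑' m, c m * y ^ m) (Set.uIcc 0 T) :=
  continuousOn_tsum (fun m => by fun_prop) hc
    fun m _ hy => norm_mul_pow_le_of_mem_uIcc (c m) hy m

lemma hasSum_integral_mul_tsum_mul_pow (hc : Summable fun m => |c m| * |T| ^ m) {g : ℝ → ℝ}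
    (hg : Continuous g) :
    HasSum (fun m => c m * ∫ y in (0 : ℝ)..T, g y * y ^ m)
      (∫ y in (0 : ℝ)..T, g y * ∑' m, c m * y ^ m) := by
  let f (m : ℕ) : C(ℝ, ℝ) := ⟨fun y => g y * (c m * y ^ m), by fun_prop⟩
  let K : TopologicalSpace.Compacts ℝ := ⟨Set.uIcc 0 T, isCompact_uIcc⟩
  have hf : Summable fun m => ‖(f m).restrict K‖ := by
    refine (hc.mul_left ‖(⟨g, hg⟩ : C(ℝ, ℝ)).restrict K‖).of_nonneg_of_le
      (fun m => norm_nonneg _) fun m => ?_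
    refine (ContinuousMap.norm_le _ (by positivity)).mpr fun y => ?_
    calc ‖g y * (c m * (y : ℝ) ^ m)‖ = ‖g y‖ * ‖c m * (y : ℝ) ^ m‖ := norm_mul _ _
      _ ≤ ‖(⟨g, hg⟩ : C(ℝ, ℝ)).restrict K‖ * (|c m| * |T| ^ m) := by
        gcongr
        · exact ((⟨g, hg⟩ : C(ℝ, ℝ)).restrict K).norm_coe_le_norm y
        · exact norm_mul_pow_le_of_mem_uIcc (c m) y.2 m
  have hswap := intervalIntegral.hasSum_intervalIntegral_of_summable_norm hf
  simp only [f, ContinuousMap.coe_mk, tsum_mul_left] at hswap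
  refine hswap.congr_fun fun m => ?_
  rw [← intervalIntegral.integral_const_mul]
  exact intervalIntegral.integral_congr fun y _ => by ring

end PowerSeries

section BesselSeries

/-- The Bessel-type series `∑ k ^ (m + 1) / (m! (m + 1)!) * y ^ m`. For `k = μ λ r`, multiplying it
by `exp (-λ r - μ y)` gives the density of the aggregate claims `S_r` on `(0, ∞)`. -/
noncomputable def besselSeries (k y : ℝ) : ℝ :=
  ∑' m : ℕ, k ^ (m + 1) / ((m ! : ℝ) * ((m + 1)! : ℝ)) * y ^ m

lemma summable_abs_besselSeries_coeff (k T : ℝ) :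
    Summable fun m : ℕ => |k ^ (m + 1) / ((m ! : ℝ) * ((m + 1)! : ℝ))| * |T| ^ m := by
  refine ((Real.summable_pow_div_factorial (|k| * |T|)).mul_left |k|).of_nonneg_of_le
    (fun m => by positivity) fun m => ?_
  rw [abs_div, abs_pow, abs_of_pos (a := (m ! : ℝ) * ((m + 1)! : ℝ)) (by positivity)]
  calc |k| ^ (m + 1) / ((m ! : ℝ) * ((m + 1)! : ℝ)) * |T| ^ m
      ≤ |k| ^ (m + 1) / (m ! : ℝ) * |T| ^ m := by
        gcongr
        exact le_mul_of_one_le_right (by positivity) (mod_cast Nat.factorial_pos _)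
    _ = |k| * ((|k| * |T|) ^ m / m !) := by ring

lemma summable_besselSeries (k y : ℝ) :
    Summable fun m : ℕ => k ^ (m + 1) / ((m ! : ℝ) * ((m + 1)! : ℝ)) * y ^ m :=
  (summable_abs_besselSeries_coeff k y).of_norm_bounded
    fun m => norm_mul_pow_le_of_mem_uIcc _ Set.right_mem_uIcc m

/-- The series of incomplete gamma functions occurring twice in `Cconst`. -/
noncomputable def gammaSeries (u v : ℝ) : ℝ :=
  ∑' m : ℕ, v ^ m / ((m ! : ℝ) * ((m + 1)! : ℝ)) * lowerGamma ((m : ℝ) + 1) u *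
    (u - ((m : ℝ) + 1))

lemma excessSum_eq_gammaSeries_add_besselSeries (u v : ℝ) :
    excessSum u v = u * exp u + v * exp u * gammaSeries u v + besselSeries (u * v) 1 := by
  have hexcess := hasSum_pow_div_factorial_mul_expExcess u v
  have htail := (summable_nat_add_iff 1).mpr hexcess.summable
  have hterm (m : ℕ) : v ^ (m + 1) / (m + 1)! * expExcess (m + 1) u -
      (u * v) ^ (m + 1) / ((m ! : ℝ) * ((m + 1)! : ℝ)) * 1 ^ m =
      v * exp u * (v ^ m / ((m ! : ℝ) * ((m + 1)! : ℝ)) * lowerGamma ((m : ℝ) + 1) u *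
        (u - ((m : ℝ) + 1))) := by
    have h := factorial_mul_expExcess_succ m u
    field_simp
    rw [mul_pow, one_pow]
    linear_combination v ^ (m + 1) * h
  have hgamma := htail.tsum_sub (summable_besselSeries (u * v) 1)
  simp_rw [hterm] at hgamma
  rw [tsum_mul_left] at hgamma
  rw [gammaSeries, hgamma, ← hexcess.tsum_eq, hexcess.summable.tsum_eq_zero_add, expExcess_zero,
    besselSeries, pow_zero, Nat.factorial_zero, Nat.cast_one, div_one]
  ring

end BesselSeries

section ClaimTransform

variable {p lam μ r : ℝ}

lemma integral_exp_mul_pow {α : ℝ} (hα : α ≠ 0) (T : ℝ) (m : ℕ) :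
    ∫ y in (0 : ℝ)..T, exp (-(α * y)) * y ^ m =
      lowerGamma ((m : ℝ) + 1) (T * α) / α ^ (m + 1) := by
  have hsubst := intervalIntegral.mul_integral_comp_mul_left (a := 0) (b := T)
    (f := fun t : ℝ => t ^ m * exp (-t)) α
  rw [mul_zero, mul_comm α T, ← intervalIntegral.integral_const_mul] at hsubst
  rw [lowerGamma_natCast_add_one, eq_div_iff (pow_ne_zero _ hα), ← hsubst, mul_comm,
    ← intervalIntegral.integral_const_mul]
  exact intervalIntegral.integral_congr fun y _ => by ring

lemma integral_exp_mul_sub_mul_pow {α : ℝ} (hα : α ≠ 0) (T : ℝ) (m : ℕ) :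
    ∫ y in (0 : ℝ)..T, exp (α * (T - y)) * (T - y) * y ^ m =
      m ! * expExcess (m + 1) (T * α) / α ^ (m + 2) := by
  have hsplit (y : ℝ) : exp (α * (T - y)) * (T - y) * y ^ m =
      exp (T * α) * T * (exp (-(α * y)) * y ^ m) -
        exp (T * α) * (exp (-(α * y)) * y ^ (m + 1)) := by
    rw [show α * (T - y) = T * α + -(α * y) by ring, exp_add]
    ring
  have hexp : exp (T * α) * exp (-(T * α)) = 1 := by rw [← exp_add, add_neg_cancel, exp_zero]
  simp_rw [hsplit]
  rw [intervalIntegral.integral_sub (Continuous.intervalIntegrable (by fun_prop) _ _)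
    (Continuous.intervalIntegrable (by fun_prop) _ _),
    intervalIntegral.integral_const_mul, intervalIntegral.integral_const_mul,
    integral_exp_mul_pow hα, integral_exp_mul_pow hα, lowerGamma_succ,
    factorial_mul_expExcess_succ]
  field_simp
  linear_combination T ^ (m + 1) * α ^ (2 * m + 2) * hexp

lemma integral_exp_mul_sub_mul_besselSeries {α : ℝ} (hα : α ≠ 0) (k T : ℝ) :
    ∫ y in (0 : ℝ)..T, exp (α * (T - y)) * (T - y) * besselSeries k y =
      (excessSum (T * α) (k / α) - T * α * exp (T * α)) / α := by
  have hintegral := hasSum_integral_mul_tsum_mul_pow (summable_abs_besselSeries_coeff k T)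
    (g := fun y => exp (α * (T - y)) * (T - y)) (by fun_prop)
  have htail := (hasSum_nat_add_iff' 1).mpr
    (hasSum_pow_div_factorial_mul_expExcess (T * α) (k / α))
  rw [Finset.sum_range_one, expExcess_zero, pow_zero, Nat.factorial_zero, Nat.cast_one, div_one,
    one_mul] at htail
  refine hintegral.unique ((htail.div_const α).congr_fun fun m => ?_)
  rw [integral_exp_mul_sub_mul_pow hα, div_pow]
  field_simp
  ring

/-- The functional `f ↦ ∫ f(z) (z / r) ℙ(X_r ∈ dz)` over `(0, ∞)`: the law of `X_r = p r - S_r` has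
an atom at `p r` of mass `exp (-λ r)` and the density obtained from that of `S_r`. -/
noncomputable def kendallTransform (p lam μ r : ℝ) (f : ℝ → ℝ) : ℝ :=
  exp (-lam * r) * (p * f (p * r) +
    ∫ y in (0 : ℝ)..(p * r), f (p * r - y) * ((p * r - y) / r) * exp (-μ * y) *
      besselSeries (μ * lam * r) y)

lemma kendallTransform_linear {f g : ℝ → ℝ} (hf : Continuous f) (hg : Continuous g) (c d : ℝ) :
    kendallTransform p lam μ r (fun z => c * f z + d * g z) =
      c * kendallTransform p lam μ r f + d * kendallTransform p lam μ r g := by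
  have hS : ContinuousOn (besselSeries (μ * lam * r)) (Set.uIcc 0 (p * r)) :=
    continuousOn_tsum_mul_pow (summable_abs_besselSeries_coeff (μ * lam * r) (p * r))
  have hint {h : ℝ → ℝ} (hh : Continuous h) : IntervalIntegrable (fun y => h (p * r - y) *
      ((p * r - y) / r) * exp (-μ * y) * besselSeries (μ * lam * r) y) volume 0 (p * r) :=
    (ContinuousOn.mul (Continuous.continuousOn (by fun_prop)) hS).intervalIntegrable
  have hsplit : ∫ y in (0 : ℝ)..(p * r), (c * f (p * r - y) + d * g (p * r - y)) *
      ((p * r - y) / r) * exp (-μ * y) * besselSeries (μ * lam * r) y =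
      c * (∫ y in (0 : ℝ)..(p * r), f (p * r - y) * ((p * r - y) / r) * exp (-μ * y) *
        besselSeries (μ * lam * r) y) +
      d * ∫ y in (0 : ℝ)..(p * r), g (p * r - y) * ((p * r - y) / r) * exp (-μ * y) *
        besselSeries (μ * lam * r) y := by
    rw [← intervalIntegral.integral_const_mul, ← intervalIntegral.integral_const_mul,
      ← intervalIntegral.integral_add ((hint hf).const_mul c) ((hint hg).const_mul d)]
    exact intervalIntegral.integral_congr fun y _ => by ring
  rw [kendallTransform, hsplit, kendallTransform, kendallTransform]
  ring

lemma kendallTransform_exp (hlam : lam ≠ 0) (hμ : μ ≠ 0) (hr : r ≠ 0) {s t : ℝ}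
    (hst : p * ((s + μ) * (t + μ)) = lam * μ) :
    kendallTransform p lam μ r (fun z => exp (s * z)) =
      exp (-(lam + μ * p) * r) / (r * (s + μ)) *
        excessSum (p * r * (s + μ)) (p * r * (t + μ)) := by
  have hα : s + μ ≠ 0 := by
    rintro h
    simp [h, hlam, hμ, eq_comm] at hst
  have hexp (y : ℝ) : exp (s * (p * r - y)) * exp (-μ * y) =
      exp (-μ * (p * r)) * exp ((s + μ) * (p * r - y)) := by
    rw [← exp_add, ← exp_add]
    ring_nf
  have hrate : μ * lam * r / (s + μ) = p * r * (t + μ) := by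
    field_simp
    linear_combination -hst
  have hintegral : ∫ y in (0 : ℝ)..(p * r), exp (s * (p * r - y)) * ((p * r - y) / r) *
      exp (-μ * y) * besselSeries (μ * lam * r) y =
      exp (-μ * (p * r)) / r * ((excessSum (p * r * (s + μ)) (p * r * (t + μ)) -
        p * r * (s + μ) * exp (p * r * (s + μ))) / (s + μ)) := by
    rw [← hrate, ← integral_exp_mul_sub_mul_besselSeries hα, ← intervalIntegral.integral_const_mul]
    refine intervalIntegral.integral_congr fun y _ => ?_
    linear_combination (p * r - y) / r * besselSeries (μ * lam * r) y * hexp y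
  have hatom : exp (s * (p * r)) = exp (-μ * (p * r)) * exp (p * r * (s + μ)) := by
    simpa [mul_comm] using hexp 0
  rw [kendallTransform, hintegral, hatom,
    show -(lam + μ * p) * r = -lam * r + -μ * (p * r) by ring, exp_add]
  field_simp
  ring

end ClaimTransform

section ScaleFunction

variable {p lam μ q : ℝ}

/-- The discriminant of the quadratic `p s ^ 2 - (q + λ - μ p) s - q μ` whose roots are
`q⁺(q)` and `q⁻(q)`. -/
noncomputable def rootDiscrim (p lam μ q : ℝ) : ℝ := (q + lam - μ * p) ^ 2 + 4 * p * q * μ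

lemma rootDiscrim_pos (hp : 0 < p) (hμ : 0 < μ) (hq : 0 < q) : 0 < rootDiscrim p lam μ q := by
  unfold rootDiscrim
  positivity

lemma qp_sub_qm_ne_zero (hp : p ≠ 0) (hD : 0 < rootDiscrim p lam μ q) :
    qp p lam μ q - qm p lam μ q ≠ 0 := by
  have hsqrt := (Real.sqrt_pos.mpr hD).ne'
  rw [rootDiscrim] at hsqrt
  rw [qp, qm, ← sub_div, add_sub_sub_cancel, ← two_mul]
  positivity

lemma qp_add_qm (hp : p ≠ 0) : p * (qp p lam μ q + qm p lam μ q) = q + lam - μ * p := by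
  rw [qp, qm]
  field_simp
  ring

lemma qp_mul_qm (hp : p ≠ 0) (hD : 0 ≤ rootDiscrim p lam μ q) :
    p * (qp p lam μ q * qm p lam μ q) = -(q * μ) := by
  have hsq := Real.sq_sqrt hD
  rw [rootDiscrim] at hsq
  rw [qp, qm]
  generalize Real.sqrt ((q + lam - μ * p) ^ 2 + 4 * p * q * μ) = D at hsq ⊢
  field_simp
  linear_combination -hsq

lemma qp_add_mul_qm_add (hp : p ≠ 0) (hD : 0 ≤ rootDiscrim p lam μ q) :
    p * ((qp p lam μ q + μ) * (qm p lam μ q + μ)) = lam * μ := by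
  linear_combination qp_mul_qm hp hD + μ * qp_add_qm (lam := lam) (μ := μ) (q := q) hp

lemma qm_add_mul_qp_add (hp : p ≠ 0) (hD : 0 ≤ rootDiscrim p lam μ q) :
    p * ((qm p lam μ q + μ) * (qp p lam μ q + μ)) = lam * μ := by
  rw [mul_comm (qm p lam μ q + μ), qp_add_mul_qm_add hp hD]

lemma Wq_eq (x : ℝ) :
    Wq p lam μ q x =
      (qp p lam μ q + μ) / (p * (qp p lam μ q - qm p lam μ q)) * exp (qp p lam μ q * x) +
      -(qm p lam μ q + μ) / (p * (qp p lam μ q - qm p lam μ q)) * exp (qm p lam μ q * x) := by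
  rw [Wq, Ap, Am, ← div_div, ← div_div]
  ring

lemma hasDerivAt_exp_const_mul (a x : ℝ) :
    HasDerivAt (fun x => exp (a * x)) (a * exp (a * x)) x := by
  simpa [mul_comm] using ((hasDerivAt_id x).const_mul a).exp

lemma hasDerivAt_Wq (x : ℝ) :
    HasDerivAt (Wq p lam μ q)
      (qp p lam μ q * (qp p lam μ q + μ) / (p * (qp p lam μ q - qm p lam μ q)) *
          exp (qp p lam μ q * x) +
        -(qm p lam μ q * (qm p lam μ q + μ)) / (p * (qp p lam μ q - qm p lam μ q)) *
          exp (qm p lam μ q * x)) x := by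
  rw [funext Wq_eq]
  refine (((hasDerivAt_exp_const_mul (qp p lam μ q) x).const_mul _).add
    ((hasDerivAt_exp_const_mul (qm p lam μ q) x).const_mul _)).congr_deriv ?_
  ring

lemma continuous_Wq : Continuous (Wq p lam μ q) :=
  continuous_iff_continuousAt.mpr fun x => (hasDerivAt_Wq x).continuousAt

lemma continuous_deriv_Wq : Continuous (deriv (Wq p lam μ q)) := by
  rw [funext fun x => (hasDerivAt_Wq (p := p) (lam := lam) (μ := μ) (q := q) x).deriv]
  fun_prop

lemma Wq_zero (hp : p ≠ 0) (hD : 0 < rootDiscrim p lam μ q) : p * Wq p lam μ q 0 = 1 := by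
  have hroots := qp_sub_qm_ne_zero hp hD
  rw [Wq_eq, mul_zero, mul_zero, exp_zero]
  field_simp
  ring

/-- The function `(q + λ) W - p W'` for the `q`-scale function `W`. Since `W` is annihilated by
`q` minus the generator of the process, this is `λ ∫₀ˣ W (x - y) μ e^{-μ y} dy`, the contribution
of the claims. -/
noncomputable def claimTerm (p lam μ q x : ℝ) : ℝ :=
  (q + lam) * Wq p lam μ q x - p * deriv (Wq p lam μ q) x

lemma claimTerm_eq (hp : p ≠ 0) (hD : 0 ≤ rootDiscrim p lam μ q) (x : ℝ) :
    claimTerm p lam μ q x = lam * μ / (p * (qp p lam μ q - qm p lam μ q)) *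
      (exp (qp p lam μ q * x) - exp (qm p lam μ q * x)) := by
  have hsum := qp_add_qm (lam := lam) (μ := μ) (q := q) hp
  rw [claimTerm, (hasDerivAt_Wq x).deriv, Wq_eq, ← qp_add_mul_qm_add hp hD]
  linear_combination (-(qp p lam μ q + μ) * exp (qp p lam μ q * x) +
    (qm p lam μ q + μ) * exp (qm p lam μ q * x)) / (p * (qp p lam μ q - qm p lam μ q)) * hsum

lemma claimTerm_zero (hp : p ≠ 0) (hD : 0 ≤ rootDiscrim p lam μ q) :
    claimTerm p lam μ q 0 = 0 := by
  rw [claimTerm_eq hp hD, mul_zero, mul_zero, sub_self, mul_zero]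

lemma hasDerivAt_claimTerm (hp : p ≠ 0) (hD : 0 ≤ rootDiscrim p lam μ q) (x : ℝ) :
    HasDerivAt (claimTerm p lam μ q)
      (lam * μ * Wq p lam μ q x - μ * claimTerm p lam μ q x) x := by
  rw [claimTerm_eq hp hD, funext (claimTerm_eq hp hD), Wq_eq]
  refine (((hasDerivAt_exp_const_mul (qp p lam μ q) x).sub
    (hasDerivAt_exp_const_mul (qm p lam μ q) x)).const_mul _).congr_deriv ?_
  ring

lemma integral_WWq_mul_deriv_Wq {δ : ℝ} (hlam : lam ≠ 0) (hμ : μ ≠ 0) (hp : p ≠ 0)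
    (hD : 0 < rootDiscrim p lam μ q) (hc : p - δ ≠ 0) (hDY : 0 < rootDiscrim (p - δ) lam μ q)
    (x z : ℝ) :
    δ * ∫ y in (0 : ℝ)..x, WWq p δ lam μ q (x - y) * deriv (Wq p lam μ q) (y + z) =
      (p - δ) * WWq p δ lam μ q x * Wq p lam μ q z -
        claimTerm (p - δ) lam μ q x * claimTerm p lam μ q z / (μ * lam) -
        Wq p lam μ q (x + z) := by
  -- The derivative of the primitive below is `δ 𝕎 W'`: the terms without `δ` cancel because
  -- `claimTerm' = λ μ W - μ claimTerm` and `claimTerm = (q + λ) W - p W'` for both drifts.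
  have hprim : ∀ y ∈ Set.uIcc 0 x, HasDerivAt
      (fun y => claimTerm (p - δ) lam μ q (x - y) * claimTerm p lam μ q (y + z) / (μ * lam) -
        (p - δ) * (Wq (p - δ) lam μ q (x - y) * Wq p lam μ q (y + z)))
      (δ * (WWq p δ lam μ q (x - y) * deriv (Wq p lam μ q) (y + z))) y := by
    intro y _
    have hY := (hasDerivAt_Wq (p := p - δ) (lam := lam) (μ := μ) (q := q) (x - y)).differentiableAt
    have hX := (hasDerivAt_Wq (p := p) (lam := lam) (μ := μ) (q := q) (y + z)).differentiableAt
    refine (((((hasDerivAt_claimTerm hc hDY.le (x - y)).comp_const_sub x y).mul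
      ((hasDerivAt_claimTerm hp hD.le (y + z)).comp_add_const y z)).div_const _).sub
      (((hY.hasDerivAt.comp_const_sub x y).mul
        (hX.hasDerivAt.comp_add_const y z)).const_mul _)).congr_deriv ?_
    rw [WWq, claimTerm, claimTerm]
    field_simp
    ring
  have hcont : Continuous (fun y => δ * (WWq p δ lam μ q (x - y) *
      deriv (Wq p lam μ q) (y + z))) := by
    have hW : Continuous (Wq (p - δ) lam μ q) := continuous_Wq
    have hW' : Continuous (deriv (Wq p lam μ q)) := continuous_deriv_Wq
    unfold WWq
    fun_prop
  rw [← intervalIntegral.integral_const_mul,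
    intervalIntegral.integral_eq_sub_of_hasDerivAt hprim (hcont.intervalIntegrable _ _), WWq]
  simp only [sub_self, sub_zero, zero_add, claimTerm_zero hc hDY.le]
  linear_combination -Wq p lam μ q (x + z) * Wq_zero hc hDY

lemma wq_eq {δ : ℝ} (hlam : lam ≠ 0) (hμ : μ ≠ 0) (hp : p ≠ 0)
    (hD : 0 < rootDiscrim p lam μ q) (hc : p - δ ≠ 0) (hDY : 0 < rootDiscrim (p - δ) lam μ q)
    (x z : ℝ) :
    wq p δ lam μ q x z = (p - δ) * WWq p δ lam μ q x * Wq p lam μ q z -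
      claimTerm (p - δ) lam μ q x * claimTerm p lam μ q z / (μ * lam) := by
  rw [wq, integral_WWq_mul_deriv_Wq hlam hμ hp hD hc hDY, add_sub_cancel]

end ScaleFunction

section KendallIdentity

variable {p lam μ q r : ℝ}

lemma kendallTransform_roots (hp : p ≠ 0) (hlam : lam ≠ 0) (hμ : μ ≠ 0) (hr : r ≠ 0)
    (hD : 0 < rootDiscrim p lam μ q) (c d : ℝ) :
    kendallTransform p lam μ r (fun z =>
      c * (qp p lam μ q + μ) / (p * (qp p lam μ q - qm p lam μ q)) * exp (qp p lam μ q * z) +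
        -(d * (qm p lam μ q + μ)) / (p * (qp p lam μ q - qm p lam μ q)) *
          exp (qm p lam μ q * z)) =
      exp (-(lam + μ * p) * r) / (p * r * (qp p lam μ q - qm p lam μ q)) *
        (c * excessSum (p * r * (qp p lam μ q + μ)) (p * r * (qm p lam μ q + μ)) -
          d * excessSum (p * r * (qm p lam μ q + μ)) (p * r * (qp p lam μ q + μ))) := by
  have hprod := qp_add_mul_qm_add hp hD.le
  have hne : p * ((qp p lam μ q + μ) * (qm p lam μ q + μ)) ≠ 0 := hprod ▸ mul_ne_zero hlam hμ
  obtain ⟨hplus, hminus⟩ := mul_ne_zero_iff.mp (right_ne_zero_of_mul hne)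
  have hroots := qp_sub_qm_ne_zero hp hD
  rw [kendallTransform_linear (by fun_prop) (by fun_prop), kendallTransform_exp hlam hμ hr hprod,
    kendallTransform_exp hlam hμ hr (qm_add_mul_qp_add hp hD.le)]
  field_simp
  ring

lemma kendallTransform_Wq (hp : p ≠ 0) (hlam : lam ≠ 0) (hμ : μ ≠ 0) (hr : r ≠ 0)
    (hD : 0 < rootDiscrim p lam μ q) :
    kendallTransform p lam μ r (Wq p lam μ q) = exp (q * r) := by
  have hroots := qp_sub_qm_ne_zero hp hD
  have hkendall := kendallTransform_roots hp hlam hμ hr hD 1 1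
  simp only [one_mul] at hkendall
  have hexp : exp (-(lam + μ * p) * r) *
      exp (p * r * (qp p lam μ q + μ) + p * r * (qm p lam μ q + μ)) = exp (q * r) := by
    rw [← exp_add]
    congr 1
    linear_combination r * qp_add_qm (lam := lam) (μ := μ) (q := q) hp
  rw [funext Wq_eq, hkendall, excessSum_sub_excessSum_swap, ← hexp]
  field_simp
  ring

lemma Cconst_eq_gammaSeries :
    Cconst p lam μ q r = exp (-lam * r) *
      (p * deriv (Wq p lam μ q) (p * r) +
        Am p lam μ q * qp p lam μ q * exp (qp p lam μ q * (p * r)) *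
          gammaSeries (p * r * (qp p lam μ q + μ)) (p * r * (qm p lam μ q + μ)) -
        Ap p lam μ q * qm p lam μ q * exp (qm p lam μ q * (p * r)) *
          gammaSeries (p * r * (qm p lam μ q + μ)) (p * r * (qp p lam μ q + μ)) +
        exp (-μ * (p * r)) / (p * r) * besselSeries (p * lam * μ * r ^ 2) 1) := by
  simp only [Cconst, gammaSeries, besselSeries, one_pow, mul_one, mul_comm (p * r) (_ + μ)]

lemma excessSum_eq_of_mul_eq {s t : ℝ} (hst : p * ((s + μ) * (t + μ)) = lam * μ) :
    excessSum (p * r * (s + μ)) (p * r * (t + μ)) =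
      exp (μ * p * r) * exp (s * (p * r)) * (p * r) *
        (s + μ + (t + μ) * gammaSeries (p * r * (s + μ)) (p * r * (t + μ))) +
      besselSeries (p * lam * μ * r ^ 2) 1 := by
  have harg : p * r * (s + μ) * (p * r * (t + μ)) = p * lam * μ * r ^ 2 := by
    linear_combination p * r ^ 2 * hst
  have hexp : exp (p * r * (s + μ)) = exp (μ * p * r) * exp (s * (p * r)) := by
    rw [← exp_add]
    ring_nf
  rw [excessSum_eq_gammaSeries_add_besselSeries, harg, hexp]
  ring

lemma kendallTransform_deriv_Wq (hp : p ≠ 0) (hlam : lam ≠ 0) (hμ : μ ≠ 0) (hr : r ≠ 0)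
    (hD : 0 < rootDiscrim p lam μ q) :
    kendallTransform p lam μ r (deriv (Wq p lam μ q)) = Cconst p lam μ q r := by
  have hroots := qp_sub_qm_ne_zero hp hD
  have hexp : exp (-lam * r) = exp (-(lam + μ * p) * r) * exp (μ * p * r) := by
    rw [← exp_add]
    ring_nf
  have hexp_neg : exp (-μ * (p * r)) = (exp (μ * p * r))⁻¹ := by
    rw [← exp_neg]
    ring_nf
  have hderiv := fun x => (hasDerivAt_Wq (p := p) (lam := lam) (μ := μ) (q := q) x).deriv
  rw [Cconst_eq_gammaSeries, hderiv, funext hderiv, kendallTransform_roots hp hlam hμ hr hD,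
    excessSum_eq_of_mul_eq (qp_add_mul_qm_add hp hD.le),
    excessSum_eq_of_mul_eq (qm_add_mul_qp_add hp hD.le), hexp, hexp_neg, Ap, Am]
  field_simp
  ring

end KendallIdentity

theorem parisian_scale_function_CL_pos_general (p δ lam μ q r : ℝ) (hp : p ≠ 0) (hδp : p - δ ≠ 0)
    (hlam : lam ≠ 0) (hμ : μ ≠ 0) (hr : r ≠ 0) (hX : 0 < rootDiscrim p lam μ q)
    (hY : 0 < rootDiscrim (p - δ) lam μ q) (x : ℝ) :
    Real.exp (-lam * r) *
        (p * wq p δ lam μ q x (p * r) +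
          ∫ y in (0 : ℝ)..(p * r),
            wq p δ lam μ q x (p * r - y) * ((p * r - y) / r) * Real.exp (-μ * y) *
              ∑' m : ℕ, (μ * lam * r) ^ (m + 1) /
                ((Nat.factorial m : ℝ) * (Nat.factorial (m + 1) : ℝ)) * y ^ m)
      = Real.exp (q * r) * (p - δ) * WWq p δ lam μ q x -
        1 / (μ * lam) *
          ((q + lam) * WWq p δ lam μ q x - (p - δ) * deriv (WWq p δ lam μ q) x) *
          ((q + lam) * Real.exp (q * r) - p * Cconst p lam μ q r) := by
  have hw : wq p δ lam μ q x = fun z =>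
      ((p - δ) * WWq p δ lam μ q x - claimTerm (p - δ) lam μ q x * (q + lam) / (μ * lam)) *
          Wq p lam μ q z +
        claimTerm (p - δ) lam μ q x * p / (μ * lam) * deriv (Wq p lam μ q) z := by
    ext z
    rw [wq_eq hlam hμ hp hX hδp hY, claimTerm.eq_def p]
    ring
  change kendallTransform p lam μ r (wq p δ lam μ q x) = _ - _ * claimTerm (p - δ) lam μ q x * _
  rw [hw, kendallTransform_linear continuous_Wq continuous_deriv_Wq,
    kendallTransform_Wq hp hlam hμ hr hX, kendallTransform_deriv_Wq hp hlam hμ hr hX]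
  ring

theorem parisian_scale_function_CL_pos (p δ lam μ q r : ℝ)
    (hp : 0 < p) (hδ : 0 < δ) (hδp : δ < p) (hlam : 0 < lam) (hμ : 0 < μ)
    (hq : 0 < q) (hr : 0 < r) (x : ℝ) (hx : 0 < x) :
    Real.exp (-lam * r) *
        (p * wq p δ lam μ q x (p * r) +
          ∫ y in (0 : ℝ)..(p * r),
            wq p δ lam μ q x (p * r - y) * ((p * r - y) / r) * Real.exp (-μ * y) *
              ∑' m : ℕ, (μ * lam * r) ^ (m + 1) /
                ((Nat.factorial m : ℝ) * (Nat.factorial (m + 1) : ℝ)) * y ^ m)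
      = Real.exp (q * r) * (p - δ) * WWq p δ lam μ q x -
        1 / (μ * lam) *
          ((q + lam) * WWq p δ lam μ q x - (p - δ) * deriv (WWq p δ lam μ q) x) *
          ((q + lam) * Real.exp (q * r) - p * Cconst p lam μ q r) :=
  parisian_scale_function_CL_pos_general p δ lam μ q r hp.ne' (sub_pos.mpr hδp).ne' hlam.ne' hμ.ne'
    hr.ne' (rootDiscrim_pos hp hμ hq) (rootDiscrim_pos (sub_pos.mpr hδp) hμ hq) x
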